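/- (Rota) Let X be a nonempty n-element set and let Π(X) be the lattice of set partitions of X, ordered by refinement (σ ≤ π iff every block of σ is contained in a block of π), with minimum 0̂ (all singletons) and maximum 1̂ (one block). Then μ_{Π(X)}(0̂, 1̂) = (−1)^{n−1}(n−1)!. -/

import Mathlib

open scoped Classical

/-- The Möbius function of a finite poset (the unique `μ` with `μ ⋆ ζ = δ`),
evaluated at a pair of elements. -/
noncomputable def mobius {P : Type*} [Fintype P] [PartialOrder P] (x y : P) : ℝ :=
  letI : LocallyFiniteOrder P := Fintype.toLocallyFiniteOrder
  IncidenceAlgebra.mu ℝ x y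

instance {α : Type*} [Finite α] : Finite (Setoid α) :=
  Finite.of_injective (fun s : Setoid α => ⇑s) fun _ _ h => Setoid.eq_iff_rel_eq.2 h

noncomputable instance {α : Type*} [Finite α] : Fintype (Setoid α) := Fintype.ofFinite _

open Polynomial in
lemma rota_aux_desc (m : ℕ) :
    (descPochhammer ℝ m).eval (-1) = (-1) ^ m * (Nat.factorial m : ℝ) := by
  induction m with
  | zero => simp
  | succ k ih =>
    rw [descPochhammer_succ_eval, ih, Nat.factorial_succ]
    push_cast
    ring

lemma rota_aux_sum {P : Type*} [Fintype P] [PartialOrder P] [OrderBot P] (y : P) :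
    ∑ x : P, (if x ≤ y then mobius ⊥ x else 0) = if (⊥ : P) = y then (1 : ℝ) else 0 := by
  letI : LocallyFiniteOrder P := Fintype.toLocallyFiniteOrder
  rw [← Finset.sum_filter, ← IncidenceAlgebra.sum_Icc_mu_right (𝕜 := ℝ) (⊥ : P) y]
  refine Finset.sum_congr ?_ fun x _ => ?_
  · ext x; simp
  · unfold mobius
    congr!

lemma rota_aux_card {X : Type*} [Fintype X] (s : Setoid X) (q : ℕ) :
    ∑ f : X → Fin q, (if s ≤ Setoid.ker f then (1 : ℝ) else 0) =
      (q : ℝ) ^ Fintype.card (Quotient s) := by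
  rw [Finset.sum_boole, ← Fintype.card_subtype, Fintype.card_congr (Setoid.liftEquiv s)]
  simp

lemma rota_aux_eval {X : Type*} [Fintype X] (q : ℕ) :
    ∑ s : Setoid X, mobius ⊥ s * (q : ℝ) ^ Fintype.card (Quotient s) =
      (q.descFactorial (Fintype.card X) : ℝ) := by
  calc
    _ = ∑ s : Setoid X, ∑ f : X → Fin q, (if s ≤ Setoid.ker f then mobius ⊥ s else 0) := by
      refine Finset.sum_congr rfl fun s _ => ?_
      rw [← rota_aux_card, Finset.mul_sum]
      simp
    _ = ∑ f : X → Fin q, if (⊥ : Setoid X) = Setoid.ker f then (1 : ℝ) else 0 := by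
      rw [Finset.sum_comm]
      exact Finset.sum_congr rfl fun f _ => rota_aux_sum _
    _ = _ := by
      rw [Finset.sum_boole, ← Fintype.card_subtype]
      have e : {f : X → Fin q // (⊥ : Setoid X) = Setoid.ker f} ≃ (X ↪ Fin q) :=
        (Equiv.subtypeEquivRight fun f => by
          rw [eq_comm, Setoid.ker_eq_bot_iff]).trans
          (Equiv.subtypeInjectiveEquivEmbedding X (Fin q))
      rw [Fintype.card_congr e, Fintype.card_embedding_eq, Fintype.card_fin]

open Polynomial in
lemma rota_aux_poly {X : Type*} [Fintype X] :
    ∑ s : Setoid X, C (mobius ⊥ s) * (Polynomial.X : ℝ[X]) ^ Fintype.card (Quotient s) =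
      descPochhammer ℝ (Fintype.card X) := by
  refine Polynomial.eq_of_infinite_eval_eq _ _
    (Set.infinite_of_injective_forall_mem (f := fun q : ℕ => (q : ℝ)) Nat.cast_injective ?_)
  intro q
  simp only [Set.mem_ofPred_eq]
  rw [descPochhammer_eval_eq_descFactorial, ← rota_aux_eval, eval_finsetSum]
  simp

/-- **Rota**: in the lattice of set partitions of a nonempty `n`-element set `X`
(realised as the lattice `Setoid X` of equivalence relations on `X`, ordered by refinement,
with minimum `⊥` the partition into singletons and maximum `⊤` the one-block partition),
the Möbius function satisfies `μ(0̂, 1̂) = (-1)^(n-1) (n-1)!`. -/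
theorem rota_mobius_partition_lattice {X : Type*} [Fintype X] [Nonempty X] :
    mobius (⊥ : Setoid X) (⊤ : Setoid X) =
      (-1) ^ (Fintype.card X - 1) * (Nat.factorial (Fintype.card X - 1) : ℝ) := by
  have h := congrArg (fun p => Polynomial.coeff p 1) (rota_aux_poly (X := X))
  simp only [Polynomial.finsetSum_coeff, Polynomial.coeff_C_mul, Polynomial.coeff_X_pow] at h
  obtain ⟨m, hm⟩ : ∃ m, Fintype.card X = m + 1 :=
    Nat.exists_eq_succ_of_ne_zero Fintype.card_ne_zero
  rw [hm, descPochhammer_succ_left, Polynomial.coeff_X_mul, Polynomial.coeff_zero_eq_eval_zero,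
    Polynomial.eval_comp] at h
  simp only [Polynomial.eval_sub, Polynomial.eval_X, Polynomial.eval_one, zero_sub] at h
  rw [rota_aux_desc, Finset.sum_eq_single (⊤ : Setoid X)] at h
  · have h1 : Fintype.card (Quotient (⊤ : Setoid X)) = 1 := by
      rw [Fintype.card_eq_one_iff]
      refine ⟨Quotient.mk _ (Classical.arbitrary X), fun a => ?_⟩
      induction a using Quotient.inductionOn
      exact Quotient.sound trivial
    rw [hm, Nat.add_sub_cancel, ← h, if_pos h1.symm, mul_one]
  · intro s _ hs
    rw [if_neg, mul_zero]
    intro h1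
    apply hs
    have := Fintype.card_le_one_iff_subsingleton.1 h1.symm.le
    rw [eq_top_iff]
    intro a b _
    exact Quotient.exact (Subsingleton.elim (Quotient.mk s a) (Quotient.mk s b))
  · intro h; exact absurd (Finset.mem_univ _) h
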